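/- arXiv:2111.06194 — 2 statements merged into one kernel-verified Lean document; each statement's English description precedes it below -/
import Mathlib

section
/- Assume s̄ ≠ 0 and val(P(s̄)) ∈ ℝ. (i) If ν is lower semi-continuous at s̄, then val(D(s̄)) = val(P(s̄)). (ii) If ∂ν(s̄) ≠ ∅, then val(D(s̄)) = val(P(s̄)) and Sol(D(s̄)) = ∂ν(s̄) = {λ ∈ Y : s̄ ∈ ∂θ(λ)} = [∂θ]⁻¹(s̄). -/
open Set Filter Topology Bornology Metric
open scoped RealInnerProductSpace

noncomputable section

variable {E : Type*} [NormedAddCommGroup E] [InnerProductSpace ℝ E]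
variable {Y : Type*} [NormedAddCommGroup Y] [InnerProductSpace ℝ Y]

/-- The set of feasible shifts `S = {s | ∃ x, g x + s ∈ K}`. -/
def feasShifts (g : E → Y) (K : Set Y) : Set Y := {s | ∃ x, g x + s ∈ K}

/-- The graph of the set-valued mapping `G_K(x) = -g(x) + K`,
i.e. `{(x, y) | g x + y ∈ K}`. -/
def gphGK (g : E → Y) (K : Set Y) : Set (E × Y) := {p | g p.1 + p.2 ∈ K}

/-- Recession cone of a convex set. -/
def recCone {Z : Type*} [AddCommGroup Z] [Module ℝ Z] (C : Set Z) : Set Z :=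
  {d | ∀ z ∈ C, ∀ t : ℝ, 0 ≤ t → z + t • d ∈ C}

/-- Horizon (recession) function of a finite-valued function `f`. -/
def horizonFn (f : E → ℝ) (h : E) : EReal :=
  ⨆ t : {t : ℝ // 0 < t}, (((f ((t : ℝ) • h) - f 0) / (t : ℝ) : ℝ) : EReal)

/-- The optimal value function `ν(s) = inf {f x : g x + s ∈ K}` of the shifted problem. -/
def valFn (f : E → ℝ) (g : E → Y) (K : Set Y) (s : Y) : EReal :=
  sInf ((fun x => (f x : EReal)) '' {x | g x + s ∈ K})

/-- The solution set `X(s)` of the shifted problem. -/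
def solSet (f : E → ℝ) (g : E → Y) (K : Set Y) (s : Y) : Set E :=
  {x | g x + s ∈ K ∧ ∀ x', g x' + s ∈ K → f x ≤ f x'}

/-- The Lagrangian `l(x,y,λ) = f x + ⟨λ, g x - y⟩`. -/
def lagr (f : E → ℝ) (g : E → Y) (x : E) (y : Y) (l : Y) : ℝ :=
  f x + ⟪l, g x - y⟫

/-- The augmented Lagrangian `l_r(x,y,λ) = f x + ⟨λ, g x - y⟩ + (r/2)‖g x - y‖²`. -/
def auglagr (f : E → ℝ) (g : E → Y) (r : ℝ) (x : E) (y : Y) (l : Y) : ℝ :=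
  f x + ⟪l, g x - y⟫ + r / 2 * ‖g x - y‖ ^ 2

/-- The dual function `θ(λ) = - inf {l(x,y,λ) : x ∈ ℝⁿ, y ∈ K}`. -/
def dualFn (f : E → ℝ) (g : E → Y) (K : Set Y) (l : Y) : EReal :=
  - sInf ((fun p : E × Y => ((lagr f g p.1 p.2 l : ℝ) : EReal)) '' {p | p.2 ∈ K})

/-- Fenchel conjugate of an extended-real-valued function. -/
def econj (h : Y → EReal) (l : Y) : EReal := ⨆ s : Y, (⟪l, s⟫ : EReal) - h s

/-- Convex subdifferential of an extended-real-valued function. -/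
def esubdiff (h : Y → EReal) (s : Y) : Set Y :=
  {l | ∀ s', h s + (⟪l, s' - s⟫ : EReal) ≤ h s'}

/-- Convexity of an extended-real-valued function, via its epigraph. -/
def ERealConvexOn (h : Y → EReal) : Prop :=
  Convex ℝ {p : Y × ℝ | h p.1 ≤ (p.2 : EReal)}

/-- Properness of an extended-real-valued function. -/
def ERealProper (h : Y → EReal) : Prop := (∀ s, h s ≠ ⊥) ∧ ∃ s, h s ≠ ⊤

/-- The optimal value `val(D(s)) = sup_λ [⟨s,λ⟩ - θ(λ)]` of the dual problem `D(s)`. -/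
def dualVal (f : E → ℝ) (g : E → Y) (K : Set Y) (s : Y) : EReal :=
  ⨆ l : Y, (⟪s, l⟫ : EReal) - dualFn f g K l

/-- The solution set `Sol(D(s))` of the dual problem `D(s)`. -/
def dualSol (f : E → ℝ) (g : E → Y) (K : Set Y) (s : Y) : Set Y :=
  {l | ∀ l', (⟪s, l'⟫ : EReal) - dualFn f g K l' ≤ (⟪s, l⟫ : EReal) - dualFn f g K l}

/-- The set of proximal points `argmin_{λ'} [h(λ') + ‖λ' - λ‖²/(2r)]`. -/
def proxSet (h : Y → EReal) (r : ℝ) (l : Y) : Set Y :=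
  {m | ∀ m', h m + ((‖m - l‖ ^ 2 / (2 * r) : ℝ) : EReal) ≤
      h m' + ((‖m' - l‖ ^ 2 / (2 * r) : ℝ) : EReal)}

/-- The Moreau–Yosida regularization `h_r(λ) = inf_{λ'} [h(λ') + ‖λ' - λ‖²/(2r)]`. -/
def moreau (h : Y → EReal) (r : ℝ) (l : Y) : EReal :=
  ⨅ m : Y, (h m + ((‖m - l‖ ^ 2 / (2 * r) : ℝ) : EReal))

/-!
The function `θ` is the Fenchel conjugate `ν*`, so `val(D(s)) = ν**(s)` and the claims are facts of
conjugate duality about the convex function `ν`. Everything rests on one equivalence: the affine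
function of slope `λ` taking the value `a` at `s` minorizes `h` if and only if
`a ≤ ⟨s, λ⟩ - h*(λ)`. With `a = h(s)` it describes `∂h(s)`; with a real `a < h(s)` it turns a
hyperplane separating `(s, a)` from the closure of the epigraph of `h` into a lower bound on
`h**(s)`.
-/

section ERealSub

variable {a b : EReal} {q r : ℝ}

theorem ereal_coe_sub_coe_sub : (q : EReal) - (r - a) = a + (q - r : ℝ) := by
  induction a with
  | bot => rw [EReal.coe_sub_bot, EReal.sub_top, EReal.bot_add]
  | top => rw [EReal.sub_top, EReal.coe_sub_bot, EReal.top_add_coe]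
  | coe a => norm_cast; ring

theorem ereal_coe_sub_coe_sub_self : (r : EReal) - (r - a) = a := by
  rw [ereal_coe_sub_coe_sub, sub_self, EReal.coe_zero, add_zero]

theorem le_ereal_coe_sub_comm : a ≤ r - b ↔ b ≤ r - a :=
  ⟨fun h => ereal_coe_sub_coe_sub_self.symm.trans_le (EReal.sub_le_sub le_rfl h),
    fun h => ereal_coe_sub_coe_sub_self.symm.trans_le (EReal.sub_le_sub le_rfl h)⟩

theorem ereal_coe_sub_le_comm : r - a ≤ b ↔ r - b ≤ a :=
  ⟨fun h => (EReal.sub_le_sub le_rfl h).trans_eq ereal_coe_sub_coe_sub_self,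
    fun h => (EReal.sub_le_sub le_rfl h).trans_eq ereal_coe_sub_coe_sub_self⟩

theorem ereal_coe_sub_le_coe_sub_iff : (q : EReal) - b ≤ r - a ↔ a + (q - r : ℝ) ≤ b := by
  rw [ereal_coe_sub_le_comm, ereal_coe_sub_coe_sub]

end ERealSub

section Conjugate

variable {h : Y → EReal} {s l : Y}

theorem inner_sub_le_econj (h : Y → EReal) (l s : Y) : (⟪l, s⟫ : EReal) - h s ≤ econj h l :=
  le_iSup (fun s : Y => (⟪l, s⟫ : EReal) - h s) s

theorem le_inner_sub_econj_iff {a : EReal} :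
    a ≤ (⟪s, l⟫ : EReal) - econj h l ↔ ∀ s', a + (⟪l, s' - s⟫ : EReal) ≤ h s' := by
  simp only [le_ereal_coe_sub_comm (a := a), econj, iSup_le_iff, real_inner_comm l s,
    ereal_coe_sub_le_coe_sub_iff, inner_sub_right]

theorem mem_esubdiff_iff_le_inner_sub_econj :
    l ∈ esubdiff h s ↔ h s ≤ (⟪s, l⟫ : EReal) - econj h l :=
  le_inner_sub_econj_iff.symm

theorem mem_esubdiff_iff_forall_inner_sub_le :
    l ∈ esubdiff h s ↔ ∀ s', (⟪l, s'⟫ : EReal) - h s' ≤ (⟪l, s⟫ : EReal) - h s := by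
  simp only [esubdiff, mem_ofPred_eq, ereal_coe_sub_le_coe_sub_iff, inner_sub_right]

theorem econj_econj_le (h : Y → EReal) (s : Y) : econj (econj h) s ≤ h s :=
  iSup_le fun l => by
    simpa only [sub_self, inner_zero_right, EReal.coe_zero, add_zero] using
      le_inner_sub_econj_iff.1 (le_refl ((⟪s, l⟫ : EReal) - econj h l)) s

theorem econj_econj_eq_of_esubdiff_nonempty (hs : (esubdiff h s).Nonempty) :
    econj (econj h) s = h s := by
  obtain ⟨l, hl⟩ := hs
  exact (econj_econj_le h s).antisymm <|
    (mem_esubdiff_iff_le_inner_sub_econj.1 hl).trans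
      (inner_sub_le_econj (econj h) s l)

theorem mem_esubdiff_econj_iff (hs : econj (econj h) s = h s) :
    s ∈ esubdiff (econj h) l ↔ l ∈ esubdiff h s := by
  rw [mem_esubdiff_iff_le_inner_sub_econj, mem_esubdiff_iff_le_inner_sub_econj, hs,
    real_inner_comm, le_ereal_coe_sub_comm]

end Conjugate

section FenchelMoreau

theorem notMem_closure_epigraph {X : Type*} [TopologicalSpace X] {h : X → EReal} {x : X} {c : ℝ}
    (hlsc : LowerSemicontinuousAt h x) (hc : (c : EReal) < h x) :
    (x, c) ∉ closure {p : X × ℝ | h p.1 ≤ (p.2 : EReal)} := by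
  obtain ⟨c', hcc', hc'⟩ := EReal.lt_iff_exists_real_btwn.1 hc
  have h_above : ∀ᶠ x' in 𝓝 x, (c' : EReal) < h x' := hlsc c' hc'
  have h_below : ∀ᶠ t in 𝓝 c, t < c' := eventually_lt_nhds (EReal.coe_lt_coe_iff.1 hcc')
  rw [mem_closure_iff_frequently, not_frequently, nhds_prod_eq]
  filter_upwards [h_above.prod_mk h_below] with p ⟨hp₁, hp₂⟩ hp
  exact (hp₁.trans_le hp).not_gt (EReal.coe_lt_coe_iff.2 hp₂)

variable [CompleteSpace Y] {h : Y → EReal} {s : Y} {c : ℝ}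

theorem exists_eq_inner_add_mul (φ : StrongDual ℝ (Y × ℝ)) :
    ∃ (z : Y) (β : ℝ), ∀ y t, φ (y, t) = ⟪z, y⟫ + t * β := by
  refine ⟨(InnerProductSpace.toDual ℝ Y).symm (φ.comp (.inl ℝ Y ℝ)), φ (0, 1), fun y t => ?_⟩
  have hsplit : (y, t) = (y, 0) + t • ((0, 1) : Y × ℝ) := by simp
  rw [hsplit, map_add, map_smul, InnerProductSpace.toDual_symm_apply]
  rfl

theorem exists_affine_le_of_lowerSemicontinuousAt (hconv : ERealConvexOn h) (hs : h s ≠ ⊤)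
    (hlsc : LowerSemicontinuousAt h s) (hc : (c : EReal) < h s) :
    ∃ l, ∀ s', (c : EReal) + (⟪l, s' - s⟫ : EReal) ≤ h s' := by
  obtain ⟨φ, u, hφs, hφ⟩ := geometric_hahn_banach_point_closed (Convex.closure hconv)
    isClosed_closure (notMem_closure_epigraph hlsc hc)
  obtain ⟨z, β, hzβ⟩ := exists_eq_inner_add_mul φ
  have hsep : ∀ s' (t : ℝ), h s' ≤ t → ⟪z, s⟫ + c * β < ⟪z, s'⟫ + t * β := fun s' t ht => by
    simpa only [hzβ] using hφs.trans (hφ (s', t) (subset_closure ht))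
  -- The separating hyperplane is not vertical, since the epigraph meets the line above `s`.
  have hβ : 0 < β := by
    obtain ⟨t, hst, -⟩ := EReal.lt_iff_exists_real_btwn.1 hs.lt_top
    have hct : c < t := EReal.coe_lt_coe_iff.1 (hc.trans hst)
    nlinarith [hsep s t hst.le]
  refine ⟨-(β⁻¹ • z), fun s' => EReal.le_of_forall_lt_iff_le.1 fun t ht => ?_⟩
  rw [← EReal.coe_add, EReal.coe_le_coe_iff, inner_neg_left, real_inner_smul_left,
    ← sub_eq_add_neg, sub_le_iff_le_add, ← sub_le_iff_le_add', le_inv_mul_iff₀ hβ, inner_sub_right]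
  linarith [hsep s' t ht.le]

theorem econj_econj_eq_of_lowerSemicontinuousAt (hconv : ERealConvexOn h) (hs : h s ≠ ⊤)
    (hlsc : LowerSemicontinuousAt h s) : econj (econj h) s = h s := by
  refine (econj_econj_le h s).antisymm (EReal.ge_of_forall_gt_iff_ge.1 fun c hc => ?_)
  obtain ⟨l, hl⟩ := exists_affine_le_of_lowerSemicontinuousAt hconv hs hlsc hc
  exact (le_inner_sub_econj_iff.2 hl).trans (inner_sub_le_econj (econj h) s l)

end FenchelMoreau

section ValueFunction

variable {X Z : Type*} [NormedAddCommGroup Z] {f : X → ℝ} {g : X → Z} {K : Set Z} {s : Z}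
  {a : EReal}

theorem le_valFn_iff : a ≤ valFn f g K s ↔ ∀ x, g x + s ∈ K → a ≤ f x := by
  simp only [valFn, le_sInf_iff, forall_mem_image, mem_ofPred_eq]

theorem valFn_lt_iff : valFn f g K s < a ↔ ∃ x, g x + s ∈ K ∧ (f x : EReal) < a := by
  simp only [valFn, sInf_lt_iff, exists_mem_image, mem_ofPred_eq]

theorem valFn_ne_top_iff : valFn f g K s ≠ ⊤ ↔ s ∈ feasShifts g K := by
  simp [← lt_top_iff_ne_top, valFn_lt_iff, feasShifts, EReal.coe_lt_top]

theorem erealConvexOn_valFn [AddCommGroup X] [Module ℝ X] [InnerProductSpace ℝ Z]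
    (hf : ConvexOn ℝ univ f) (hgraph : Convex ℝ (gphGK g K)) :
    ERealConvexOn (valFn f g K) := by
  rintro ⟨s₁, t₁⟩ h₁ ⟨s₂, t₂⟩ h₂ a b ha hb hab
  refine EReal.le_of_forall_lt_iff_le.1 fun t ht => ?_
  -- The infima need not be attained, so take solutions that are optimal up to `ε`.
  obtain ⟨ε, hε, rfl⟩ : ∃ ε > 0, t = a * t₁ + b * t₂ + ε :=
    ⟨t - (a * t₁ + b * t₂), sub_pos.2 (EReal.coe_lt_coe_iff.1 ht), by ring⟩
  have exists_feasible_lt : ∀ {s' : Z} {t' : ℝ}, valFn f g K s' ≤ t' →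
      ∃ x, g x + s' ∈ K ∧ f x < t' + ε := fun {s' t'} hs' => by
    have hlt : valFn f g K s' < (t' + ε : ℝ) :=
      hs'.trans_lt (EReal.coe_lt_coe_iff.2 (lt_add_of_pos_right t' hε))
    simpa only [EReal.coe_lt_coe_iff] using valFn_lt_iff.1 hlt
  obtain ⟨x₁, hx₁, hfx₁⟩ := exists_feasible_lt h₁
  obtain ⟨x₂, hx₂, hfx₂⟩ := exists_feasible_lt h₂
  have hfeas : g (a • x₁ + b • x₂) + (a • s₁ + b • s₂) ∈ K :=
    hgraph (x := (x₁, s₁)) hx₁ (y := (x₂, s₂)) hx₂ ha hb hab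
  refine (le_valFn_iff.1 le_rfl _ hfeas).trans (EReal.coe_le_coe_iff.2 ?_)
  calc f (a • x₁ + b • x₂) ≤ a * f x₁ + b * f x₂ := hf.2 (mem_univ x₁) (mem_univ x₂) ha hb hab
    _ ≤ a * (t₁ + ε) + b * (t₂ + ε) := by gcongr
    _ = a * t₁ + b * t₂ + ε := by linear_combination ε * hab

end ValueFunction

section Duality

variable {X : Type*} (f : X → ℝ) (g : X → Y) (K : Set Y) (s : Y)

theorem dualFn_eq_econj_valFn : dualFn f g K = econj (valFn f g K) := by
  refine funext fun l => eq_of_forall_ge_iff fun a => ?_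
  have hlagr : ∀ x s', -((lagr f g x (g x + s') l : ℝ) : EReal) = (⟪l, s'⟫ : EReal) - f x :=
    fun x s' => by
      rw [lagr, sub_add_cancel_left, inner_neg_right, ← EReal.coe_neg, neg_add', sub_neg_eq_add,
        neg_add_eq_sub, EReal.coe_sub]
  calc dualFn f g K l ≤ a
      ↔ ∀ x, ∀ y ∈ K, -((lagr f g x y l : ℝ) : EReal) ≤ a := by
        simp only [dualFn, EReal.neg_le (b := a), le_sInf_iff, forall_mem_image,
          Prod.forall, mem_ofPred_eq]
    _ ↔ ∀ x s', g x + s' ∈ K → (⟪l, s'⟫ : EReal) - f x ≤ a := by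
        simp only [← hlagr]
        exact forall_congr' fun x => (Equiv.addLeft (g x)).forall_congr_right.symm
    _ ↔ econj (valFn f g K) l ≤ a := by
        simp only [econj, iSup_le_iff, ereal_coe_sub_le_comm (b := a), le_valFn_iff]
        exact forall_comm

theorem dualVal_eq_econj_econj_valFn : dualVal f g K s = econj (econj (valFn f g K)) s := by
  rw [← dualFn_eq_econj_valFn]
  rfl

theorem dualSol_eq_setOf_mem_esubdiff_dualFn :
    dualSol f g K s = {l | s ∈ esubdiff (dualFn f g K) l} :=
  Set.ext fun _ => mem_esubdiff_iff_forall_inner_sub_le.symm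

variable {f g K s} in
theorem dualSol_eq_esubdiff_valFn (hs : dualVal f g K s = valFn f g K s) :
    dualSol f g K s = esubdiff (valFn f g K) s := by
  rw [dualVal_eq_econj_econj_valFn] at hs
  rw [dualSol_eq_setOf_mem_esubdiff_dualFn, dualFn_eq_econj_valFn]
  ext l
  rw [mem_ofPred_eq, mem_esubdiff_econj_iff hs]

end Duality

theorem dual_of_least_violated_shift_general {X : Type*} [AddCommGroup X] [Module ℝ X]
    [CompleteSpace Y] {f : X → ℝ} {g : X → Y} {K : Set Y}
    (hfconv : ConvexOn ℝ univ f) (hgraph : Convex ℝ (gphGK g K)) {s : Y}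
    (hs : s ∈ feasShifts g K) :
    (LowerSemicontinuousAt (valFn f g K) s → dualVal f g K s = valFn f g K s) ∧
    ((esubdiff (valFn f g K) s).Nonempty →
      dualVal f g K s = valFn f g K s ∧
      dualSol f g K s = esubdiff (valFn f g K) s ∧
      dualSol f g K s = {l | s ∈ esubdiff (dualFn f g K) l}) := by
  refine ⟨fun hlsc => ?_, fun hne => ?_⟩
  · rw [dualVal_eq_econj_econj_valFn]
    exact econj_econj_eq_of_lowerSemicontinuousAt (erealConvexOn_valFn hfconv hgraph)
      (valFn_ne_top_iff.2 hs) hlsc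
  · have hval : dualVal f g K s = valFn f g K s := by
      rw [dualVal_eq_econj_econj_valFn, econj_econj_eq_of_esubdiff_nonempty hne]
    exact ⟨hval, dualSol_eq_esubdiff_valFn hval, dualSol_eq_setOf_mem_esubdiff_dualFn f g K s⟩

/-- Proposition 4.1: for the least violated shift `s̄ ≠ 0` with
`val(P(s̄)) ∈ ℝ`: (i) if `ν` is lsc at `s̄` then `val(D(s̄)) = val(P(s̄))`;
(ii) if `∂ν(s̄) ≠ ∅` then moreover `Sol(D(s̄)) = ∂ν(s̄) = [∂θ]⁻¹(s̄)`. -/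
theorem dual_of_least_violated_shift {n : ℕ} {Y : Type*} [NormedAddCommGroup Y]
    [InnerProductSpace ℝ Y] [FiniteDimensional ℝ Y]
    (f : EuclideanSpace ℝ (Fin n) → ℝ) (g : EuclideanSpace ℝ (Fin n) → Y) (K : Set Y)
    (hfconv : ConvexOn ℝ Set.univ f)
    (hKne : K.Nonempty) (hKclosed : IsClosed K) (hKconv : Convex ℝ K)
    (hgraph : Convex ℝ (gphGK g K))
    (hSclosed : IsClosed (feasShifts g K))
    (sbar : Y) (hsbarS : sbar ∈ feasShifts g K)
    (hsbarmin : ∀ s ∈ feasShifts g K, ‖sbar‖ ≤ ‖s‖)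
    (hsbarne : sbar ≠ 0)
    (hval : ∃ v : ℝ, valFn f g K sbar = (v : EReal)) :
    -- (i)
    (LowerSemicontinuousAt (valFn f g K) sbar →
      dualVal f g K sbar = valFn f g K sbar) ∧
    -- (ii)
    ((esubdiff (valFn f g K) sbar).Nonempty →
      dualVal f g K sbar = valFn f g K sbar ∧
      dualSol f g K sbar = esubdiff (valFn f g K) sbar ∧
      dualSol f g K sbar = {l | sbar ∈ esubdiff (dualFn f g K) l}) :=
  dual_of_least_violated_shift_general hfconv hgraph hsbarS
end
end

section
/- The dual function θ is lower semi-continuous and convex. Suppose θ is proper and let r > 0. Then the Moreau–Yosida regularization satisfies θ_r(λ) = −inf{l_r(x,y,λ) : x ∈ ℝⁿ, y ∈ K}, where l_r is the augmented Lagrangian. Moreover, if (x(λ,r), y(λ,r)) ∈ argmin{l_r(x,y,λ) : x ∈ ℝⁿ, y ∈ K}, then P_{rθ}(λ) = λ + r[g(x(λ,r)) − y(λ,r)] and y(λ,r) − g(x(λ,r)) ∈ ∂θ(P_{rθ}(λ)). -/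
open Set Filter Topology Bornology Metric
open scoped RealInnerProductSpace

noncomputable section

variable {E : Type*} [NormedAddCommGroup E] [InnerProductSpace ℝ E]
variable {Y : Type*} [NormedAddCommGroup Y] [InnerProductSpace ℝ Y]

/-!
The value function of the shifted problem, `ν(s) = inf {f x : g x + s ∈ K}`, is convex because `f`
and the graph of `G_K` are, and substituting `s = y - g x` exhibits `θ` as its conjugate.
A Lagrangian and an augmented Lagrangian term at the same `(x, y)` differ by a completed square,
`-l(x, y, m) + ‖m - λ‖² / (2r) = -l_r(x, y, λ) + ‖m - (λ + r(g x - y))‖² / (2r)`,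
which gives `θ_r(λ) ≥ -inf l_r(·, ·, λ)`. Conversely, if `p ≤ l_r(·, ·, λ)`, then the concave
quadratic `s ↦ p + ⟨λ, s⟩ - (r/2)‖s‖²` lies below `ν`. Hahn–Banach separates the two by an affine
function, and its slope `m` satisfies `θ(m) + ‖m - λ‖² / (2r) ≤ -p`.
When `p = l_r(x̂, ŷ, λ)` is the minimum, the same square forces `m = λ + r(g x̂ - ŷ)`.
-/

section EReal

lemma neg_sInf_coe_image {α : Type*} (φ : α → ℝ) (S : Set α) :
    -sInf ((fun p => (φ p : EReal)) '' S) = ⨆ p ∈ S, ((-φ p : ℝ) : EReal) := by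
  rw [sInf_image]
  refine eq_of_forall_ge_iff fun c => ?_
  simp only [EReal.neg_le, le_iInf_iff, iSup_le_iff, EReal.coe_neg]

lemma ERealConvexOn.iSup {ι : Sort*} {h : ι → Y → EReal} (hh : ∀ i, ERealConvexOn (h i)) :
    ERealConvexOn (fun l => ⨆ i, h i l) := by
  simpa only [ERealConvexOn, iSup_le_iff, ofPred_forall] using convex_iInter hh

lemma erealConvexOn_coe {φ : Y → ℝ} (hφ : ConvexOn ℝ univ φ) :
    ERealConvexOn (fun l => (φ l : EReal)) := by
  simpa only [ERealConvexOn, EReal.coe_le_coe_iff, mem_univ, true_and] using hφ.convex_epigraph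

end EReal

section Separation

lemma exists_affine_between {F : Type*} [AddCommGroup F] [Module ℝ F] [TopologicalSpace F]
    [IsTopologicalAddGroup F] [ContinuousSMul ℝ F] {h : F → ℝ} {C : Set (F × ℝ)}
    (hconc : ConcaveOn ℝ univ h) (hlsc : LowerSemicontinuous h) (hC : Convex ℝ C)
    (hCne : C.Nonempty) (hle : ∀ q ∈ C, h q.1 ≤ q.2) :
    ∃ (ℓ : StrongDual ℝ F) (c : ℝ), (∀ u, h u ≤ ℓ u + c) ∧ ∀ q ∈ C, ℓ q.1 + c ≤ q.2 := by
  have hopen : IsOpen {p : F × ℝ | p.2 < h p.1} := by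
    simpa only [compl_ofPred, not_le] using hlsc.isClosed_epigraph.isOpen_compl
  have hconv : Convex ℝ {p : F × ℝ | p.2 < h p.1} := by
    simpa only [mem_univ, true_and] using hconc.convex_strict_hypograph
  have hdisj : Disjoint {p : F × ℝ | p.2 < h p.1} C :=
    disjoint_left.2 fun p hp hpC => (hle p hpC).not_gt hp
  obtain ⟨φ, c, hlt, hge⟩ := geometric_hahn_banach_open hconv hopen hC hdisj
  set α := φ (0, 1)
  have hφ : ∀ u t, φ (u, t) = φ (u, 0) + t * α := fun u t => by
    rw [← smul_eq_mul, ← map_smul, ← map_add]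
    simp
  have hα : 0 < α := by
    obtain ⟨⟨u, t⟩, hq⟩ := hCne
    have hbelow := hlt (u, h u - 1) (sub_one_lt (h u))
    have habove := hge _ hq
    have hut : h u ≤ t := hle _ hq
    rw [hφ] at hbelow habove
    have : 0 < (t - (h u - 1)) * α := by linarith
    exact pos_of_mul_pos_right this (by linarith)
  have hℓ : ∀ u, (-α⁻¹ • φ.comp (.inl ℝ F ℝ)) u + c / α = (c - φ (u, 0)) / α := fun u => by
    simp
    ring
  refine ⟨-α⁻¹ • φ.comp (.inl ℝ F ℝ), c / α, fun u => ?_, fun q hq => ?_⟩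
  · rw [hℓ]
    refine le_of_forall_lt fun t ht => ?_
    have := hlt (u, t) ht
    rw [hφ] at this
    rw [lt_div_iff₀ hα]
    linarith
  · have := hge q hq
    rw [← Prod.mk.eta (p := q), hφ] at this
    rw [hℓ, div_le_iff₀ hα]
    linarith

lemma concaveOn_const_add_inner_sub_norm_sq (p : ℝ) {r : ℝ} (hr : 0 ≤ r) (l : Y) :
    ConcaveOn ℝ univ fun u : Y => p + ⟪l, u⟫ - r / 2 * ‖u‖ ^ 2 := by
  have haffine : ConcaveOn ℝ univ fun u : Y => p + ⟪l, u⟫ :=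
    (concaveOn_const p convex_univ).add ((innerₛₗ ℝ l).concaveOn convex_univ)
  have hsq : ConvexOn ℝ univ fun u : Y => ‖u‖ ^ 2 :=
    convexOn_univ_norm.pow (fun _ _ => norm_nonneg _) 2
  exact haffine.sub (hsq.smul (by positivity : 0 ≤ r / 2))

lemma exists_affine_le_of_forall_inner_sub_norm_sq_le [CompleteSpace Y] {C : Set (Y × ℝ)}
    (hC : Convex ℝ C) {p r : ℝ} (hr : 0 < r) {l : Y}
    (hp : ∀ q ∈ C, p + ⟪l, q.1⟫ - r / 2 * ‖q.1‖ ^ 2 ≤ q.2) :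
    ∃ m : Y, ∀ q ∈ C, p + ‖m - l‖ ^ 2 / (2 * r) + ⟪m, q.1⟫ ≤ q.2 := by
  obtain rfl | hCne := C.eq_empty_or_nonempty
  · exact ⟨l, fun q hq => hq.elim⟩
  have hcont : Continuous fun u : Y => p + ⟪l, u⟫ - r / 2 * ‖u‖ ^ 2 := by fun_prop
  obtain ⟨ℓ, c, hbelow, habove⟩ := exists_affine_between
    (concaveOn_const_add_inner_sub_norm_sq p hr.le l) hcont.lowerSemicontinuous hC hCne hp
  obtain ⟨m, rfl⟩ := (InnerProductSpace.toDual ℝ Y).surjective ℓ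
  simp only [InnerProductSpace.toDual_apply_apply] at hbelow habove
  refine ⟨m, fun q hq => ?_⟩
  -- The gap between the affine function and the quadratic is smallest at `(l - m) / r`.
  have hmax := hbelow (r⁻¹ • (l - m))
  have hsq : ⟪l, r⁻¹ • (l - m)⟫ - ⟪m, r⁻¹ • (l - m)⟫ - r / 2 * ‖r⁻¹ • (l - m)‖ ^ 2
      = ‖m - l‖ ^ 2 / (2 * r) := by
    rw [← inner_sub_left, real_inner_smul_right, real_inner_self_eq_norm_sq, norm_smul, mul_pow,
      Real.norm_eq_abs, sq_abs, norm_sub_rev m l]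
    field_simp
    ring
  linarith [habove q hq]

end Separation

section Duality

variable {X : Type*} {f : X → ℝ} {g : X → Y} {K : Set Y}

lemma dualFn_eq_iSup (f : X → ℝ) (g : X → Y) (K : Set Y) (l : Y) :
    dualFn f g K l = ⨆ p ∈ {p : X × Y | p.2 ∈ K}, ((-lagr f g p.1 p.2 l : ℝ) : EReal) :=
  neg_sInf_coe_image _ _

lemma dualFn_le_coe_iff {l : Y} {c : ℝ} :
    dualFn f g K l ≤ c ↔ ∀ x, ∀ y ∈ K, -lagr f g x y l ≤ c := by
  simp only [dualFn_eq_iSup, iSup_le_iff, EReal.coe_le_coe_iff, mem_ofPred_eq, Prod.forall]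

lemma neg_lagr_le_dualFn (x : X) {y : Y} (hy : y ∈ K) (l : Y) :
    ((-lagr f g x y l : ℝ) : EReal) ≤ dualFn f g K l := by
  rw [dualFn_eq_iSup]
  exact le_iSup₂_of_le (x, y) hy le_rfl

lemma lowerSemicontinuous_dualFn (f : X → ℝ) (g : X → Y) (K : Set Y) :
    LowerSemicontinuous (dualFn f g K) := by
  simp_rw [funext (dualFn_eq_iSup f g K)]
  refine lowerSemicontinuous_biSup fun p _ => Continuous.lowerSemicontinuous ?_
  refine continuous_coe_real_ereal.comp ?_
  unfold lagr
  fun_prop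

lemma convexOn_neg_lagr (f : X → ℝ) (g : X → Y) (x : X) (y : Y) :
    ConvexOn ℝ univ fun l => -lagr f g x y l := by
  have hlin : ConcaveOn ℝ univ fun l : Y => ⟪l, g x - y⟫ := by
    simp_rw [real_inner_comm (g x - y)]
    exact (innerₛₗ ℝ (g x - y)).concaveOn convex_univ
  exact ((concaveOn_const (f x) convex_univ).add hlin).neg

lemma erealConvexOn_dualFn (f : X → ℝ) (g : X → Y) (K : Set Y) :
    ERealConvexOn (dualFn f g K) := by
  rw [funext (dualFn_eq_iSup f g K)]
  exact .iSup fun p => .iSup fun _ => erealConvexOn_coe (convexOn_neg_lagr f g p.1 p.2)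

lemma sub_mem_esubdiff_dualFn {x : X} {y l : Y} (hy : y ∈ K)
    (h : dualFn f g K l ≤ ((-lagr f g x y l : ℝ) : EReal)) :
    y - g x ∈ esubdiff (dualFn f g K) l := by
  intro l'
  calc dualFn f g K l + (⟪y - g x, l' - l⟫ : EReal)
      ≤ ((-lagr f g x y l + ⟪y - g x, l' - l⟫ : ℝ) : EReal) := by
        rw [EReal.coe_add]
        gcongr
    _ = ((-lagr f g x y l' : ℝ) : EReal) := by
        rw [EReal.coe_eq_coe_iff, real_inner_comm, ← neg_sub (g x) y, inner_neg_right,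
          inner_sub_left, lagr, lagr]
        ring
    _ ≤ dualFn f g K l' := neg_lagr_le_dualFn x hy l'

/-- The set lying between the strict epigraph and the epigraph of the value function `valFn f g K`
of the shifted problems; unlike `valFn` it involves no infinite values, so that convexity and
separation can be expressed in `Y × ℝ`. -/
def valEpi {V : Type*} [AddCommGroup V] (f : X → ℝ) (g : X → V) (K : Set V) : Set (V × ℝ) :=
  {q | ∃ x, g x + q.1 ∈ K ∧ f x ≤ q.2}

lemma sub_mk_mem_valEpi {V : Type*} [AddCommGroup V] {f : X → ℝ} {g : X → V} {K : Set V} (x : X)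
    {y : V} (hy : y ∈ K) : (y - g x, f x) ∈ valEpi f g K :=
  ⟨x, by simpa using hy, le_rfl⟩

lemma convex_valEpi {V : Type*} [NormedAddCommGroup V] [Module ℝ V] [AddCommGroup X] [Module ℝ X]
    {g : X → V} {K : Set V} (hf : ConvexOn ℝ univ f) (hg : Convex ℝ (gphGK g K)) :
    Convex ℝ (valEpi f g K) := by
  rintro ⟨s, t⟩ ⟨x, hx, hxt⟩ ⟨s', t'⟩ ⟨x', hx', hxt'⟩ a b ha hb hab
  have hmem : (x, s) ∈ gphGK g K := hx
  have hmem' : (x', s') ∈ gphGK g K := hx'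
  refine ⟨a • x + b • x', hg hmem hmem' ha hb hab, ?_⟩
  calc f (a • x + b • x') ≤ a • f x + b • f x' := hf.2 (mem_univ x) (mem_univ x') ha hb hab
    _ ≤ a • t + b • t' := by gcongr

lemma neg_lagr_add_norm_sub_sq_div (f : X → ℝ) (g : X → Y) {r : ℝ} (hr : r ≠ 0) (x : X)
    (y l m : Y) :
    -lagr f g x y m + ‖m - l‖ ^ 2 / (2 * r)
      = -auglagr f g r x y l + ‖m - (l + r • (g x - y))‖ ^ 2 / (2 * r) := by
  rw [← sub_sub m l, norm_sub_sq_real (m - l), norm_smul, mul_pow, Real.norm_eq_abs, sq_abs,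
    real_inner_smul_right, inner_sub_left, lagr, auglagr]
  field_simp
  ring

lemma neg_auglagr_add_norm_sub_sq_div_le {r : ℝ} (hr : r ≠ 0) (x : X) {y : Y} (hy : y ∈ K)
    (l m : Y) :
    ((-auglagr f g r x y l + ‖m - (l + r • (g x - y))‖ ^ 2 / (2 * r) : ℝ) : EReal)
      ≤ dualFn f g K m + ((‖m - l‖ ^ 2 / (2 * r) : ℝ) : EReal) := by
  rw [← neg_lagr_add_norm_sub_sq_div f g hr, EReal.coe_add]
  gcongr
  exact neg_lagr_le_dualFn x hy m

lemma neg_auglagr_le_dualFn_add {r : ℝ} (hr : 0 < r) (x : X) {y : Y} (hy : y ∈ K) (l m : Y) :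
    ((-auglagr f g r x y l : ℝ) : EReal)
      ≤ dualFn f g K m + ((‖m - l‖ ^ 2 / (2 * r) : ℝ) : EReal) := by
  refine le_trans ?_ (neg_auglagr_add_norm_sub_sq_div_le hr.ne' x hy l m)
  rw [EReal.coe_le_coe_iff]
  exact le_add_of_nonneg_right (by positivity)

lemma eq_add_smul_of_dualFn_add_le {r : ℝ} (hr : 0 < r) {x : X} {y l m : Y} (hy : y ∈ K)
    (h : dualFn f g K m + ((‖m - l‖ ^ 2 / (2 * r) : ℝ) : EReal)
      ≤ ((-auglagr f g r x y l : ℝ) : EReal)) :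
    m = l + r • (g x - y) := by
  have hle := (neg_auglagr_add_norm_sub_sq_div_le hr.ne' x hy l m).trans h
  rw [EReal.coe_le_coe_iff, add_le_iff_nonpos_right, div_le_iff₀ (by positivity), zero_mul] at hle
  exact sub_eq_zero.1 (norm_eq_zero.1 ((sq_nonpos_iff _).1 hle))

section Convex

variable [AddCommGroup X] [Module ℝ X] [CompleteSpace Y]

lemma exists_dualFn_add_le (hf : ConvexOn ℝ univ f)
    (hg : Convex ℝ (gphGK g K)) {r : ℝ} (hr : 0 < r) {l : Y} {c : ℝ}
    (hc : ∀ x, ∀ y ∈ K, -auglagr f g r x y l ≤ c) :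
    ∃ m, dualFn f g K m + ((‖m - l‖ ^ 2 / (2 * r) : ℝ) : EReal) ≤ c := by
  have hquad : ∀ q ∈ valEpi f g K, -c + ⟪l, q.1⟫ - r / 2 * ‖q.1‖ ^ 2 ≤ q.2 := by
    rintro ⟨s, t⟩ ⟨x, hx, hxt⟩
    have := hc x _ hx
    rw [auglagr, sub_add_cancel_left, inner_neg_right, norm_neg] at this
    linarith
  obtain ⟨m, hm⟩ :=
    exists_affine_le_of_forall_inner_sub_norm_sq_le (convex_valEpi hf hg) hr hquad
  have hdual : dualFn f g K m ≤ ((c - ‖m - l‖ ^ 2 / (2 * r) : ℝ) : EReal) := by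
    refine dualFn_le_coe_iff.2 fun x y hy => ?_
    have := hm _ (sub_mk_mem_valEpi x hy)
    rw [← neg_sub (g x) y, inner_neg_right] at this
    rw [lagr]
    linarith
  refine ⟨m, ?_⟩
  calc dualFn f g K m + ((‖m - l‖ ^ 2 / (2 * r) : ℝ) : EReal)
      ≤ ((c - ‖m - l‖ ^ 2 / (2 * r) : ℝ) : EReal) + ((‖m - l‖ ^ 2 / (2 * r) : ℝ) : EReal) := by
        gcongr
    _ = c := by rw [← EReal.coe_add, sub_add_cancel]

theorem moreau_dualFn (hf : ConvexOn ℝ univ f) (hg : Convex ℝ (gphGK g K))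
    {r : ℝ} (hr : 0 < r) (l : Y) :
    moreau (dualFn f g K) r l =
      -sInf ((fun p : X × Y => ((auglagr f g r p.1 p.2 l : ℝ) : EReal)) '' {p | p.2 ∈ K}) := by
  rw [neg_sInf_coe_image]
  refine le_antisymm (EReal.le_of_forall_lt_iff_le.1 fun c hc => ?_)
    (le_iInf fun m => iSup₂_le fun p (hp : p.2 ∈ K) =>
      neg_auglagr_le_dualFn_add hr p.1 hp l m)
  have hbound : ∀ x, ∀ y ∈ K, -auglagr f g r x y l ≤ c := fun x y hy =>
    EReal.coe_le_coe_iff.1 ((le_iSup₂_of_le (x, y) hy le_rfl).trans hc.le)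
  obtain ⟨m, hm⟩ := exists_dualFn_add_le hf hg hr hbound
  exact iInf_le_of_le m hm

variable {r : ℝ} {l : Y} {xhat : X} {yhat : Y}

lemma dualFn_add_le_of_forall_auglagr_le (hf : ConvexOn ℝ univ f) (hg : Convex ℝ (gphGK g K))
    (hr : 0 < r) (hy : yhat ∈ K)
    (hmin : ∀ x, ∀ y ∈ K, auglagr f g r xhat yhat l ≤ auglagr f g r x y l) :
    dualFn f g K (l + r • (g xhat - yhat))
        + ((‖l + r • (g xhat - yhat) - l‖ ^ 2 / (2 * r) : ℝ) : EReal)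
      ≤ ((-auglagr f g r xhat yhat l : ℝ) : EReal) := by
  obtain ⟨m, hm⟩ := exists_dualFn_add_le hf hg hr fun x y hy => neg_le_neg (hmin x y hy)
  rwa [← eq_add_smul_of_dualFn_add_le hr hy hm]

theorem proxSet_dualFn_eq_singleton (hf : ConvexOn ℝ univ f) (hg : Convex ℝ (gphGK g K))
    (hr : 0 < r) (hy : yhat ∈ K)
    (hmin : ∀ x, ∀ y ∈ K, auglagr f g r xhat yhat l ≤ auglagr f g r x y l) :
    proxSet (dualFn f g K) r l = {l + r • (g xhat - yhat)} := by
  have hle := dualFn_add_le_of_forall_auglagr_le hf hg hr hy hmin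
  refine eq_singleton_iff_unique_mem.2 ⟨fun m => ?_, fun m hm => ?_⟩
  · exact hle.trans (neg_auglagr_le_dualFn_add hr xhat hy l m)
  · exact eq_add_smul_of_dualFn_add_le hr hy ((hm _).trans hle)

theorem sub_mem_esubdiff_dualFn_add_smul (hf : ConvexOn ℝ univ f) (hg : Convex ℝ (gphGK g K))
    (hr : 0 < r) (hy : yhat ∈ K)
    (hmin : ∀ x, ∀ y ∈ K, auglagr f g r xhat yhat l ≤ auglagr f g r x y l) :
    yhat - g xhat ∈ esubdiff (dualFn f g K) (l + r • (g xhat - yhat)) := by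
  refine sub_mem_esubdiff_dualFn hy ?_
  have hle := dualFn_add_le_of_forall_auglagr_le hf hg hr hy hmin
  have hsq := neg_lagr_add_norm_sub_sq_div f g hr.ne' xhat yhat l (l + r • (g xhat - yhat))
  rw [sub_self, norm_zero, zero_pow two_ne_zero, zero_div, add_zero] at hsq
  rw [← hsq, EReal.coe_add] at hle
  exact (EReal.addLECancellable_coe _).add_le_add_iff_right.1 hle

end Convex

theorem moreau_dualFn_and_prox_general [AddCommGroup X] [Module ℝ X]
    [CompleteSpace Y] (f : X → ℝ) (g : X → Y) (K : Set Y)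
    (hfconv : ConvexOn ℝ univ f) (hgraph : Convex ℝ (gphGK g K)) :
    (LowerSemicontinuous (dualFn f g K) ∧ ERealConvexOn (dualFn f g K)) ∧
    ∀ r : ℝ, 0 < r →
      (∀ l : Y, moreau (dualFn f g K) r l =
        -sInf ((fun p : X × Y => ((auglagr f g r p.1 p.2 l : ℝ) : EReal)) '' {p | p.2 ∈ K})) ∧
      (∀ (l : Y) (xhat : X) (yhat : Y), yhat ∈ K →
        (∀ x y, y ∈ K → auglagr f g r xhat yhat l ≤ auglagr f g r x y l) →
        proxSet (dualFn f g K) r l = {l + r • (g xhat - yhat)} ∧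
        yhat - g xhat ∈ esubdiff (dualFn f g K) (l + r • (g xhat - yhat))) :=
  ⟨⟨lowerSemicontinuous_dualFn f g K, erealConvexOn_dualFn f g K⟩, fun _ hr =>
    ⟨moreau_dualFn hfconv hgraph hr, fun _ _ _ hy hmin =>
      ⟨proxSet_dualFn_eq_singleton hfconv hgraph hr hy hmin,
        sub_mem_esubdiff_dualFn_add_smul hfconv hgraph hr hy hmin⟩⟩⟩

end Duality

/-- Lemma 4.1: `θ` is lsc convex; if `θ` is proper and `r > 0`, then
the Moreau–Yosida regularization satisfies `θ_r(λ) = -inf {l_r(x,y,λ) : x, y ∈ K}`, and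
if `(x̂, ŷ)` minimizes `l_r(·,·,λ)` over `ℝⁿ × K`, then
`P_{rθ}(λ) = λ + r(g x̂ - ŷ)` and `ŷ - g x̂ ∈ ∂θ(P_{rθ}(λ))`. -/
theorem moreau_dualFn_and_prox {n : ℕ} {Y : Type*} [NormedAddCommGroup Y]
    [InnerProductSpace ℝ Y] [FiniteDimensional ℝ Y]
    (f : EuclideanSpace ℝ (Fin n) → ℝ) (g : EuclideanSpace ℝ (Fin n) → Y) (K : Set Y)
    (hfconv : ConvexOn ℝ Set.univ f)
    (hKne : K.Nonempty) (hKclosed : IsClosed K) (hKconv : Convex ℝ K)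
    (hgraph : Convex ℝ (gphGK g K)) :
    (LowerSemicontinuous (dualFn f g K) ∧ ERealConvexOn (dualFn f g K)) ∧
    (ERealProper (dualFn f g K) → ∀ r : ℝ, 0 < r →
      (∀ l : Y, moreau (dualFn f g K) r l =
        - sInf ((fun p : EuclideanSpace ℝ (Fin n) × Y =>
            ((auglagr f g r p.1 p.2 l : ℝ) : EReal)) '' {p | p.2 ∈ K})) ∧
      (∀ (l : Y) (xhat : EuclideanSpace ℝ (Fin n)) (yhat : Y), yhat ∈ K →
        (∀ x y, y ∈ K → auglagr f g r xhat yhat l ≤ auglagr f g r x y l) →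
        proxSet (dualFn f g K) r l = {l + r • (g xhat - yhat)} ∧
        yhat - g xhat ∈ esubdiff (dualFn f g K) (l + r • (g xhat - yhat)))) := by
  have := FiniteDimensional.complete ℝ Y
  exact (moreau_dualFn_and_prox_general f g K hfconv hgraph).imp_right fun h _ => h
end
end
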